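/- Let r and s be positive integers with s ≤ r. Every Gallai r-coloring of the edges of the complete graph K_n contains an s-colored subgraph whose chromatic number is at least n^{s/r}, i.e., there exists a set S of s colors such that χ(G_S) ≥ n^{s/r}. -/

import Mathlib

/-!
By Gallai's theorem the vertices of a Gallai coloring split into at least two blocks such that any
two blocks are joined by a single color and at most two colors `p`, `q` occur between blocks.

Let `S_j` be finitely many sets of colors such that every color lies in at least `k ≥ 1` of them,
and let `f_j` be a proper coloring of `G_{S_j}`. Then `n ^ k ≤ ∏ j, |f_j(V)|`, by induction on the
number `n` of vertices: if `p ∈ S_j`, then `f_j` takes disjoint sets of values on two blocks that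
are joined by the color `p`, and likewise for `q`. Distribute the indices `j` over `k` groups, each
containing some `j` with `p ∈ S_j` and some `j` with `q ∈ S_j`. Within each group the products of
the value sets of different blocks are disjoint boxes, and Hölder's inequality combines the `k`
groups.

Applied to the `r` translates of an `s`-element subset of `ℤ/r`, which contain each color exactly
`s` times, the inequality bounds the largest of the `r` chromatic numbers from below.
-/

section Gallai

/-- An edge coloring of the complete graph on `V`, given as a symmetric function of two vertices,
is a Gallai coloring if it has no rainbow triangle. The values on the diagonal are irrelevant. -/
structure IsGallai {V κ : Type*} (c : V → V → κ) : Prop where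
  symm : ∀ u v, c u v = c v u
  not_rainbow : ∀ u v w, u ≠ v → v ≠ w → u ≠ w →
    ¬(c u v ≠ c v w ∧ c v w ≠ c u w ∧ c u v ≠ c u w)

/-- The graph `G_S` of all edges whose color lies in `S`. -/
def colorGraph {V κ : Type*} (c : V → V → κ) (S : Set κ) : SimpleGraph V :=
  SimpleGraph.fromRel fun u v => c u v ∈ S

/-- Any two classes of the partition `s` are joined by edges of a single color. -/
def IsHomogeneous {V κ : Type*} (c : V → V → κ) (s : Setoid V) : Prop :=
  ∀ ⦃u u' v v' : V⦄, s u u' → s v v' → ¬ s u v → c u v = c u' v'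

variable {U V κ : Type*} {c : V → V → κ} {i p q : κ} {x : V}

namespace IsGallai

lemma eq_of_ne_of_ne (hc : IsGallai c) {u v w : V} (huv : u ≠ v) (hvw : v ≠ w) (huw : u ≠ w)
    (h : c u v ≠ c v w) (h' : c u v ≠ c u w) : c v w = c u w := by
  by_contra hne
  exact hc.not_rainbow u v w huv hvw huw ⟨h, hne, h'⟩

lemma comap (hc : IsGallai c) {f : U → V} (hf : f.Injective) :
    IsGallai fun u v => c (f u) (f v) where
  symm _ _ := hc.symm _ _
  not_rainbow _ _ _ huv hvw huw := hc.not_rainbow _ _ _ (hf.ne huv) (hf.ne hvw) (hf.ne huw)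

lemma colorGraph_adj (hc : IsGallai c) {S : Set κ} {u v : V} :
    (colorGraph c S).Adj u v ↔ u ≠ v ∧ c u v ∈ S := by
  simp [colorGraph, hc.symm v u]

lemma color_ne_of_not_reachable (hc : IsGallai c) {v w : V}
    (h : ¬ (colorGraph c {i}).Reachable v w) : v ≠ w ∧ c v w ≠ i := by
  have hvw : v ≠ w := by rintro rfl; exact h .rfl
  exact ⟨hvw, fun hi => h (hc.colorGraph_adj.2 ⟨hvw, hi⟩).reachable⟩

lemma color_eq_of_reachable (hc : IsGallai c) {v w w' : V}
    (hw : (colorGraph c {i}).Reachable w w') (hv : ¬ (colorGraph c {i}).Reachable v w) :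
    c v w = c v w' := by
  obtain ⟨walk⟩ := hw
  induction walk with
  | nil => rfl
  | @cons a b _ hab _ ih =>
    have hvb : ¬ (colorGraph c {i}).Reachable v b := fun h => hv (h.trans hab.symm.reachable)
    obtain ⟨hva_ne, hva⟩ := hc.color_ne_of_not_reachable hv
    obtain ⟨hvb_ne, hvb'⟩ := hc.color_ne_of_not_reachable hvb
    obtain ⟨hab_ne, hab_color : c a b = i⟩ := hc.colorGraph_adj.1 hab
    rw [← ih hvb, hc.symm v a, hc.symm v b]
    refine (hc.eq_of_ne_of_ne hab_ne hvb_ne.symm hva_ne.symm ?_ ?_).symm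
    · rwa [hab_color, hc.symm, ne_comm]
    · rwa [hab_color, hc.symm, ne_comm]

lemma isHomogeneous_reachableSetoid (hc : IsGallai c) (i : κ) :
    IsHomogeneous c (colorGraph c {i}).reachableSetoid := by
  intro u u' v v' hu hv huv
  have huv' : ¬ (colorGraph c {i}).Reachable v' u := fun h => huv (hv.trans h).symm
  rw [hc.color_eq_of_reachable hv huv, hc.symm, hc.color_eq_of_reachable hu huv', hc.symm]

end IsGallai

lemma exists_reachable_comap_adj {G : SimpleGraph V} {z : V} (h : G.Reachable z x)
    (hz : z ≠ x) :
    ∃ y : {v // v ≠ x}, (G.comap Subtype.val).Reachable ⟨z, hz⟩ y ∧ G.Adj y x := by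
  obtain ⟨walk⟩ := h
  induction walk with
  | nil => exact absurd rfl hz
  | @cons a b x hab _ ih =>
    by_cases hb : b = x
    · exact ⟨⟨a, hz⟩, .rfl, hb ▸ hab⟩
    · obtain ⟨y, hby, hyx⟩ := ih hb
      have hab' : (G.comap (Subtype.val : {v // v ≠ x} → V)).Adj ⟨a, hz⟩ ⟨b, hb⟩ := hab
      exact ⟨y, hab'.reachable.trans hby, hyx⟩

lemma colorGraph_comap {f : U → V} (hf : f.Injective) (S : Set κ) :
    colorGraph (fun u v => c (f u) (f v)) S = (colorGraph c S).comap f := by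
  ext u v
  simp [colorGraph, hf.ne_iff]

namespace IsGallai

/-- Some edge of color `i` joins `x` to the component of `t` in `V \ {x}`; it forces the color of
`xz`. -/
lemma color_eq_of_not_reachable_compl (hc : IsGallai c) (hconn : (colorGraph c {i}).Preconnected)
    {t z : {v // v ≠ x}}
    (htz : ¬ (colorGraph (fun u v : {v // v ≠ x} => c u v) {i}).Reachable z t)
    (hxz : c x z ≠ i) : c x z = c z t := by
  have hc' := hc.comap (Subtype.val_injective (p := (· ≠ x)))
  obtain ⟨y, hty, hyx⟩ := exists_reachable_comap_adj (hconn t x) t.2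
  rw [← colorGraph_comap Subtype.val_injective] at hty
  obtain ⟨-, hyx_color⟩ := hc.colorGraph_adj.1 hyx
  obtain ⟨hzy_ne, hzy_color⟩ := hc'.color_ne_of_not_reachable fun h => htz (h.trans hty.symm)
  have hxy_color : c x y = i := (hc.symm _ _).trans hyx_color
  rw [show c z t = c z y from hc'.color_eq_of_reachable hty htz, hc.symm (z : V) y]
  refine (hc.eq_of_ne_of_ne y.2.symm (fun h => hzy_ne (Subtype.ext h.symm)) z.2.symm ?_ ?_).symm
  · rw [hxy_color, hc.symm]
    exact hzy_color.symm
  · rw [hxy_color]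
    exact hxz.symm

lemma exists_two_colors_star (hc : IsGallai c) (hconn : (colorGraph c {i}).Preconnected)
    (hdisc : ¬ (colorGraph (fun u v : {v // v ≠ x} => c u v) {i}).Preconnected) :
    ∃ j, ∀ y ≠ x, c x y = i ∨ c x y = j := by
  by_cases hmono : ∀ y ≠ x, c x y = i
  · exact ⟨i, fun y hy => .inl (hmono y hy)⟩
  push Not at hmono
  obtain ⟨z, hz, hxz⟩ := hmono
  refine ⟨c x z, fun w hw => or_iff_not_imp_left.2 fun hxw => ?_⟩
  have hc' := hc.comap (Subtype.val_injective (p := (· ≠ x)))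
  lift z to {v // v ≠ x} using hz
  lift w to {v // v ≠ x} using hw
  set H := colorGraph (fun u v : {v // v ≠ x} => c u v) {i}
  by_cases hzw : H.Reachable z w
  · obtain ⟨t, htz⟩ : ∃ t, ¬ H.Reachable t z := by
      by_contra! hall
      exact hdisc fun a b => (hall a).trans (hall b).symm
    have htw : ¬ H.Reachable t w := fun h => htz (h.trans hzw.symm)
    rw [hc.color_eq_of_not_reachable_compl hconn (fun h => htw h.symm) hxw,
      hc.color_eq_of_not_reachable_compl hconn (fun h => htz h.symm) hxz, hc.symm, hc.symm z]
    exact (hc'.color_eq_of_reachable hzw htz).symm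
  · rw [hc.color_eq_of_not_reachable_compl hconn (fun h => hzw h.symm) hxw,
      hc.color_eq_of_not_reachable_compl hconn hzw hxz, hc.symm]

lemma exists_color_eq_of_preconnected (hc : IsGallai c) {u v : V} (huv : u ≠ v)
    (hconn : (colorGraph c {c u v}).Preconnected) (x : V) : ∃ y ≠ x, c x y = c u v := by
  have : Nontrivial V := ⟨u, v, huv⟩
  obtain ⟨y, hxy⟩ := hconn.exists_adj_of_nontrivial x
  obtain ⟨hne, hcolor⟩ := hc.colorGraph_adj.1 hxy
  exact ⟨y, hne.symm, hcolor⟩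

/-- Only `p` and `q` occur away from `x`, so a third color at `x`, being connected, is the color of
every edge at `x`. -/
lemma exists_two_colors_star_of_compl (hc : IsGallai c)
    (hconn : ∀ u v, u ≠ v → (colorGraph c {c u v}).Preconnected)
    (hpq : ∀ u ≠ x, ∀ v ≠ x, u ≠ v → c u v = p ∨ c u v = q) :
    ∃ p q, ∀ y ≠ x, c x y = p ∨ c x y = q := by
  by_contra! hstar
  obtain ⟨w, hwx, hwp, hwq⟩ := hstar p q
  obtain ⟨z, hzx, hzw, -⟩ := hstar (c x w) (c x w)
  obtain ⟨y, hyz, hy⟩ := hc.exists_color_eq_of_preconnected hwx.symm (hconn x w hwx.symm) z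
  by_cases hyx : y = x
  · exact hzw (by rw [← hy, hyx, hc.symm])
  · exact (hpq z hzx y hyx hyz.symm).elim (fun h => hwp (hy ▸ h)) fun h => hwq (hy ▸ h)

theorem exists_two_colors_of_preconnected [Finite V] [Nonempty κ] (hc : IsGallai c)
    (hconn : ∀ u v, u ≠ v → (colorGraph c {c u v}).Preconnected) :
    ∃ p q, ∀ u v, u ≠ v → c u v = p ∨ c u v = q := by
  induction hn : Nat.card V using Nat.strong_induction_on generalizing V with
  | h n ih =>
  rcases isEmpty_or_nonempty V with _ | ⟨⟨x⟩⟩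
  · exact ⟨Classical.arbitrary κ, Classical.arbitrary κ, fun u => isEmptyElim u⟩
  suffices hstar : ∃ p q, ∀ y ≠ x, c x y = p ∨ c x y = q by
    obtain ⟨p, q, hpq⟩ := hstar
    refine ⟨p, q, fun u v huv => ?_⟩
    obtain ⟨y, hyx, hy⟩ := hc.exists_color_eq_of_preconnected huv (hconn u v huv) x
    exact hy ▸ hpq y hyx
  by_cases hconn' : ∀ u v : {v // v ≠ x}, u ≠ v →
      (colorGraph (fun u v : {v // v ≠ x} => c u v) {c u v}).Preconnected
  · have hlt : Nat.card {v // v ≠ x} < n := hn ▸ Finite.card_subtype_lt (x := x) (by simp)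
    obtain ⟨p, q, hpq⟩ := ih _ hlt (hc.comap Subtype.val_injective) hconn' rfl
    exact hc.exists_two_colors_star_of_compl hconn fun u hu v hv huv =>
      hpq ⟨u, hu⟩ ⟨v, hv⟩ fun h => huv (congrArg Subtype.val h)
  · push Not at hconn'
    obtain ⟨u, v, huv, hdisc⟩ := hconn'
    exact ⟨_, hc.exists_two_colors_star (hconn u v (Subtype.coe_injective.ne huv)) hdisc⟩

end IsGallai

lemma le_comap_mk {s : Setoid V} (t : Setoid (Quotient s)) : s ≤ t.comap (Quotient.mk s) := by
  intro u v h
  rw [Setoid.comap_rel, Quotient.sound h]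

namespace IsHomogeneous

variable {s : Setoid V}

lemma color_eq_color_out (hs : IsHomogeneous c s) {u v : V} (huv : ¬ s u v) :
    c u v = c (⟦u⟧ : Quotient s).out (⟦v⟧ : Quotient s).out :=
  hs (s.symm (Quotient.mk_out u)) (s.symm (Quotient.mk_out v)) huv

lemma comap_mk (hs : IsHomogeneous c s) {t : Setoid (Quotient s)}
    (ht : IsHomogeneous (fun a b : Quotient s => c a.out b.out) t) :
    IsHomogeneous c (t.comap (Quotient.mk s)) := by
  intro u u' v v' hu hv huv
  have huv' : ¬ t ⟦u'⟧ ⟦v'⟧ := fun h => huv (t.trans hu (t.trans h (t.symm hv)))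
  rw [hs.color_eq_color_out fun h => huv (le_comap_mk t h),
    hs.color_eq_color_out fun h => huv' (le_comap_mk t h)]
  exact ht hu hv huv

end IsHomogeneous

theorem IsGallai.exists_isHomogeneous_two_colors [Finite V] [Nontrivial V] (hc : IsGallai c) :
    ∃ s : Setoid V, s ≠ ⊤ ∧ IsHomogeneous c s ∧
      ∃ p q, ∀ u v, ¬ s u v → c u v = p ∨ c u v = q := by
  induction hn : Nat.card V using Nat.strong_induction_on generalizing V with
  | h n ih =>
  by_cases hconn : ∀ u v, u ≠ v → (colorGraph c {c u v}).Preconnected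
  · obtain ⟨x⟩ := (inferInstance : Nonempty V)
    have : Nonempty κ := ⟨c x x⟩
    refine ⟨⊥, fun h => ?_, ?_, hc.exists_two_colors_of_preconnected hconn⟩
    · obtain ⟨u, v, huv⟩ := exists_pair_ne V
      exact huv (Setoid.eq_top_iff.1 h u v)
    · rintro u _ v _ rfl rfl -
      rfl
  push Not at hconn
  obtain ⟨a, b, hab, hdisc⟩ := hconn
  set s := (colorGraph c {c a b}).reachableSetoid
  have hs : IsHomogeneous c s := hc.isHomogeneous_reachableSetoid _
  have : Nontrivial (Quotient s) := by
    simp only [SimpleGraph.Preconnected, not_forall] at hdisc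
    obtain ⟨u, v, huv⟩ := hdisc
    exact ⟨⟦u⟧, ⟦v⟧, fun h => huv (Quotient.exact h)⟩
  have hlt : Nat.card (Quotient s) < n := by
    by_contra! hle
    have hreach : (colorGraph c {c a b}).Reachable a b :=
      (hc.colorGraph_adj.2 ⟨hab, Set.mem_singleton _⟩).reachable
    exact hab <| (Quotient.mk_surjective.bijective_of_nat_card_le (hn ▸ hle)).1 <|
      Quotient.sound (s := s) hreach
  obtain ⟨t, ht, hhom, p, q, hpq⟩ := ih _ hlt (hc.comap Quotient.out_injective) rfl
  refine ⟨t.comap (Quotient.mk s), fun htop => ht ?_, hs.comap_mk hhom, p, q, fun u v huv => ?_⟩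
  · exact Setoid.eq_top_iff.2 <| Quotient.ind₂ <| Setoid.eq_top_iff.1 htop
  · rw [hs.color_eq_color_out fun h => huv (le_comap_mk t h)]
    exact hpq _ _ huv

end Gallai

section Products

open Finset
open scoped ENNReal

variable {ι W : Type*} {α : ι → Type*}

lemma sum_pow_card_le_prod_sum {I : Type*} [Fintype I] [Nonempty I] [Fintype W] {a : W → ℝ≥0∞}
    {g : I → W → ℝ≥0∞} (h : ∀ w, a w ^ Fintype.card I ≤ ∏ i, g i w) :
    (∑ w, a w) ^ Fintype.card I ≤ ∏ i, ∑ w, g i w := by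
  let _ : MeasurableSpace W := ⊤
  set e : ℝ := (Fintype.card I : ℝ)⁻¹ with he
  have hI : Fintype.card I ≠ 0 := Fintype.card_ne_zero
  have he_nonneg : 0 ≤ e := by positivity
  have holder : ∑ w, ∏ i, g i w ^ e ≤ ∏ i, (∑ w, g i w) ^ e := by
    simpa only [MeasureTheory.lintegral_count, tsum_fintype] using
      ENNReal.lintegral_prod_norm_pow_le (μ := MeasureTheory.Measure.count) univ (f := g)
        (fun i _ => measurable_from_top.aemeasurable) (p := fun _ => e)
        (by simp [he]) fun _ _ => he_nonneg
  calc (∑ w, a w) ^ Fintype.card I ≤ (∏ i, (∑ w, g i w) ^ e) ^ Fintype.card I := by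
        refine pow_le_pow_left' ((sum_le_sum fun w _ => ?_).trans holder) _
        rw [← ENNReal.pow_rpow_inv_natCast hI (a w), ENNReal.prod_rpow_of_nonneg he_nonneg]
        exact ENNReal.rpow_le_rpow (h w) he_nonneg
    _ = ∏ i, ∑ w, g i w := by simp only [← prod_pow, e, ENNReal.rpow_inv_natCast_pow hI]

variable [∀ j, DecidableEq (α j)]

/-- The boxes `∏ j ∈ J, F j w` are pairwise disjoint. -/
lemma sum_prod_card_le_prod_card_biUnion [Fintype W] {J : Finset ι} {F : ∀ j, W → Finset (α j)}
    (h : ∀ w w', w ≠ w' → ∃ j ∈ J, Disjoint (F j w) (F j w')) :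
    ∑ w, ∏ j ∈ J, #(F j w) ≤ ∏ j ∈ J, #(univ.biUnion (F j)) := by
  classical
  simp_rw [← card_pi]
  rw [← card_biUnion]
  · exact card_le_card <| biUnion_subset.2 fun w _ => pi_subset _ _ fun j _ =>
      subset_biUnion_of_mem (F j) (mem_univ w)
  · intro w _ w' _ hne
    obtain ⟨j, hj, hdisj⟩ := h w w' hne
    exact pi_disjoint_of_disjoint _ _ hj hdisj

lemma exists_retraction_surjOn {A B : Finset ι} (hA : A.Nonempty) (hAB : #A ≤ #B) :
    ∃ φ : ι → A, (∀ a : A, φ a = a) ∧ ∀ a : A, ∃ b ∈ B, φ b = a := by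
  classical
  obtain ⟨a₀, ha₀⟩ := hA
  obtain ⟨e⟩ : Nonempty (↥(A \ B) ↪ ↥(B \ A)) := by
    rw [Function.Embedding.nonempty_iff_card_le]
    simpa using card_sdiff_le_card_sdiff_iff.2 hAB
  have he : Function.Injective fun a => (e a : ι) := Subtype.val_injective.comp e.injective
  let ψ : ι → A := Function.extend (fun a => (e a : ι)) (fun a => ⟨a, (mem_sdiff.1 a.2).1⟩)
    fun _ => ⟨a₀, ha₀⟩
  refine ⟨fun j => if hj : j ∈ A then ⟨j, hj⟩ else ψ j, fun a => by simp, fun a => ?_⟩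
  by_cases haB : (a : ι) ∈ B
  · exact ⟨a, haB, by simp⟩
  · obtain ⟨heB, heA⟩ := mem_sdiff.1 (e ⟨a, mem_sdiff.2 ⟨a.2, haB⟩⟩).2
    exact ⟨_, heB, (dif_neg heA).trans (he.extend_apply _ _ _)⟩

lemma sum_pow_le_prod_card_biUnion [Fintype ι] [Fintype W] {A B : Finset ι} {k : ℕ} (hk : k ≠ 0)
    (hA : k ≤ #A) (hB : k ≤ #B) {a : W → ℕ} {F : ∀ j, W → Finset (α j)}
    (ha : ∀ w, a w ^ k ≤ ∏ j, #(F j w))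
    (hF : ∀ w w', w ≠ w' →
      (∀ j ∈ A, Disjoint (F j w) (F j w')) ∨ ∀ j ∈ B, Disjoint (F j w) (F j w')) :
    (∑ w, a w) ^ k ≤ ∏ j, #(univ.biUnion (F j)) := by
  classical
  obtain ⟨A', hA'A, rfl⟩ := exists_subset_card_eq hA
  have hA' : A'.Nonempty := card_ne_zero.1 hk
  have := hA'.to_subtype
  obtain ⟨φ, hφA, hφB⟩ := exists_retraction_surjOn hA' hB
  have hblock (i : A') :
      ∑ w, ∏ j with φ j = i, #(F j w) ≤ ∏ j with φ j = i, #(univ.biUnion (F j)) := by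
    -- Each fiber of `φ` meets both `A'` and `B`, so the boxes over it are disjoint.
    refine sum_prod_card_le_prod_card_biUnion fun w w' hne => ?_
    rcases hF w w' hne with hdisj | hdisj
    · exact ⟨i, by simp [hφA], hdisj i (hA'A i.2)⟩
    · obtain ⟨b, hbB, hb⟩ := hφB i
      exact ⟨b, by simp [hb], hdisj b hbB⟩
  have holder : (∑ w, a w) ^ #A' ≤ ∏ i, ∑ w, ∏ j with φ j = i, #(F j w) := by
    have := sum_pow_card_le_prod_sum (I := A') (a := fun w => (a w : ℝ≥0∞))
      (g := fun i w => ((∏ j with φ j = i, #(F j w) : ℕ) : ℝ≥0∞)) fun w => by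
        rw [Fintype.card_coe, ← Nat.cast_prod, prod_fiberwise]
        exact_mod_cast ha w
    rw [Fintype.card_coe] at this
    exact_mod_cast this
  calc (∑ w, a w) ^ #A' ≤ ∏ i, ∑ w, ∏ j with φ j = i, #(F j w) := holder
    _ ≤ ∏ i, ∏ j with φ j = i, #(univ.biUnion (F j)) := prod_le_prod' fun i _ => hblock i
    _ = ∏ j, #(univ.biUnion (F j)) := prod_fiberwise _ _ _

end Products

section ChromaticNumber

open Finset
open Fintype (card)
open scoped Pointwise

variable {V κ : Type*} [Fintype V] {c : V → V → κ}

lemma IsHomogeneous.disjoint_image_fibers {α : Type*} [DecidableEq α] {s : Setoid V}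
    [DecidableEq (Quotient s)] (hs : IsHomogeneous c s) {S : Set κ} {f : V → α}
    (hf : ∀ u v, u ≠ v → c u v ∈ S → f u ≠ f v) {u v : V} (huv : ¬ s u v) (hS : c u v ∈ S) :
    Disjoint (univ.image fun x : {x // (⟦x⟧ : Quotient s) = ⟦u⟧} => f x)
      (univ.image fun y : {y // (⟦y⟧ : Quotient s) = ⟦v⟧} => f y) := by
  simp only [disjoint_left, mem_image, mem_univ, true_and]
  rintro _ ⟨⟨x, hx⟩, rfl⟩ ⟨⟨y, hy⟩, hxy⟩
  have hux : s u x := s.symm (Quotient.exact hx)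
  have hvy : s v y := s.symm (Quotient.exact hy)
  have hne : x ≠ y := by
    rintro rfl
    exact huv (s.trans hux (s.symm hvy))
  exact hf x y hne (hs hux hvy huv ▸ hS) hxy.symm

namespace IsGallai

theorem card_pow_le_prod_card_image [DecidableEq κ] {ι : Type*} [Fintype ι] {α : ι → Type*}
    [∀ j, DecidableEq (α j)] (hc : IsGallai c) {S : ι → Finset κ} {k : ℕ} (hk : k ≠ 0)
    (hS : ∀ p, k ≤ #{j | p ∈ S j}) {f : ∀ j, V → α j}
    (hf : ∀ j u v, u ≠ v → c u v ∈ S j → f j u ≠ f j v) :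
    card V ^ k ≤ ∏ j, #(univ.image (f j)) := by
  classical
  induction hn : card V using Nat.strong_induction_on generalizing V with
  | h n ih =>
  subst hn
  rcases subsingleton_or_nontrivial V with _ | _
  · rcases isEmpty_or_nonempty V with _ | _
    · simp [hk]
    · refine (pow_le_one' (Fintype.card_le_one_iff_subsingleton.2 ‹_›) k).trans
        (one_le_prod' fun j _ => ?_)
      exact (univ_nonempty.image (f j)).card_pos
  obtain ⟨s, hs_ne, hs, p, q, hpq⟩ := hc.exists_isHomogeneous_two_colors
  let block (w : Quotient s) : Type _ := {v : V // ⟦v⟧ = w}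
  have hblock_lt (w : Quotient s) : card (block w) < card V := by
    obtain ⟨v, hv⟩ : ∃ v : V, ⟦v⟧ ≠ w := by
      by_contra! hall
      exact hs_ne (Setoid.eq_top_iff.2 fun u v => Quotient.exact ((hall u).trans (hall v).symm))
    exact Fintype.card_subtype_lt hv
  have hcard : card V = ∑ w, card (block w) := by
    rw [← Fintype.card_sigma]
    exact Fintype.card_congr (Equiv.sigmaFiberEquiv (Quotient.mk s)).symm
  rw [hcard]
  refine (sum_pow_le_prod_card_biUnion hk (hS p) (hS q)
    (F := fun j w => univ.image fun v : block w => f j v) (fun w => ?_) ?_).trans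
    (prod_le_prod' fun j _ => card_le_card ?_)
  · exact ih _ (hblock_lt w) (hc.comap Subtype.val_injective)
      (fun j u v huv => hf j u v (Subtype.coe_injective.ne huv)) rfl
  · refine Quotient.ind₂ fun u v huv => ?_
    have hsuv : ¬ s u v := fun h => huv (Quotient.sound h)
    refine (hpq u v hsuv).imp (fun h j hj => ?_) fun h j hj => ?_ <;>
      exact hs.disjoint_image_fibers (hf j) hsuv (h ▸ (mem_filter.1 hj).2)
  · simp only [biUnion_subset, image_subset_iff]
    exact fun _ _ v _ => mem_image_of_mem (f j) (mem_univ v.1)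

theorem card_pow_le_prod_chromaticNumber [DecidableEq κ] {ι : Type*} [Fintype ι]
    (hc : IsGallai c) {S : ι → Finset κ} {k : ℕ} (hk : k ≠ 0) (hS : ∀ p, k ≤ #{j | p ∈ S j}) :
    card V ^ k ≤ ∏ j, (colorGraph c (S j)).chromaticNumber.toNat := by
  let f (j : ι) : (colorGraph c (S j)).Coloring (Fin (colorGraph c (S j)).chromaticNumber.toNat) :=
    (SimpleGraph.colorable_chromaticNumber_of_fintype _).some
  refine (hc.card_pow_le_prod_card_image hk hS (f := fun j => f j) fun j u v huv huvS =>
    (f j).valid (hc.colorGraph_adj.2 ⟨huv, huvS⟩)).trans (prod_le_prod' fun j _ => ?_)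
  exact (card_le_univ _).trans_eq (Fintype.card_fin _)

theorem exists_card_pow_le_chromaticNumber_vadd_pow [DecidableEq κ] [AddGroup κ]
    [Fintype κ] (hc : IsGallai c) {T : Finset κ} (hT : T.Nonempty) :
    ∃ g : κ, card V ^ #T ≤ (colorGraph c ↑(g +ᵥ T)).chromaticNumber.toNat ^ card κ := by
  obtain ⟨g, -, hmax⟩ := exists_max_image univ
    (fun g : κ => (colorGraph c ↑(g +ᵥ T)).chromaticNumber.toNat) univ_nonempty
  refine ⟨g, ?_⟩
  have hcount (p : κ) : #{g : κ | p ∈ g +ᵥ T} = #T := by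
    refine card_equiv ((Equiv.neg κ).trans (Equiv.addRight p)) fun g => ?_
    simp [← neg_vadd_mem_iff]
  calc card V ^ #T ≤ ∏ g : κ, (colorGraph c ↑(g +ᵥ T)).chromaticNumber.toNat :=
        hc.card_pow_le_prod_chromaticNumber hT.card_ne_zero fun p => (hcount p).ge
    _ ≤ _ := prod_le_pow_card _ _ _ hmax

theorem exists_card_eq_card_pow_le_chromaticNumber_pow [Fintype κ] (hc : IsGallai c) {m : ℕ}
    (hm : m ≠ 0) (hmκ : m ≤ card κ) :
    ∃ S : Finset κ, #S = m ∧
      card V ^ m ≤ (colorGraph c S).chromaticNumber.toNat ^ card κ := by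
  classical
  obtain ⟨T, -, rfl⟩ := exists_subset_card_eq (s := (univ : Finset κ)) hmκ
  have : NeZero (card κ) := ⟨fun h => hm (Nat.le_zero.1 (hmκ.trans_eq h))⟩
  let _ : AddGroup κ := (Fintype.equivFin κ).addGroup
  obtain ⟨g, hg⟩ := hc.exists_card_pow_le_chromaticNumber_vadd_pow (card_ne_zero.1 hm)
  exact ⟨g +ᵥ T, card_vadd_finset g T, hg⟩

end IsGallai

end ChromaticNumber

lemma rpow_div_le_of_pow_le_pow {x y : ℝ} (hx : 0 ≤ x) (hy : 0 ≤ y) {m n : ℕ} (hn : n ≠ 0)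
    (h : x ^ m ≤ y ^ n) : x ^ ((m : ℝ) / n) ≤ y := by
  rw [div_eq_mul_inv, Real.rpow_mul hx, Real.rpow_natCast,
    Real.rpow_inv_le_iff_of_pos (pow_nonneg hx m) hy (Nat.cast_pos.2 hn.bot_lt), Real.rpow_natCast]
  exact h

/-- Every Gallai `r`-coloring of the edges of `K_n` contains an `s`-colored subgraph
whose chromatic number is at least `n^(s/r)`, for positive integers `s ≤ r`.
The coloring is a symmetric function `c` on ordered pairs of vertices with no
rainbow triangle; for a set `S` of colors, `G_S` consists of the edges whose
color lies in `S`. -/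
theorem stmt_1 (r s n : ℕ) (hs : 0 < s) (hr : 0 < r) (hsr : s ≤ r)
    (c : Fin n → Fin n → Fin r)
    (hsym : ∀ u v, c u v = c v u)
    (hGallai : ∀ u v w : Fin n, u ≠ v → v ≠ w → u ≠ w →
      ¬(c u v ≠ c v w ∧ c v w ≠ c u w ∧ c u v ≠ c u w)) :
    ∃ S : Finset (Fin r), S.card = s ∧
      (n : ℝ) ^ ((s : ℝ) / (r : ℝ)) ≤
        (((SimpleGraph.fromRel fun u v => c u v ∈ S).chromaticNumber).toNat : ℝ) := by
  have hc : IsGallai c := ⟨hsym, hGallai⟩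
  obtain ⟨S, hS, hχ⟩ :=
    hc.exists_card_eq_card_pow_le_chromaticNumber_pow hs.ne' (by rwa [Fintype.card_fin])
  rw [Fintype.card_fin, Fintype.card_fin] at hχ
  exact ⟨S, hS, rpow_div_le_of_pow_le_pow (Nat.cast_nonneg n) (Nat.cast_nonneg _) hr.ne'
    (mod_cast hχ)⟩
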